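/- arXiv:2512.14199 — 3 statements merged into one kernel-verified Lean document; each statement's English description precedes it below -/
import Mathlib

section
/- The normal fan of every parking function polytope coarsens the normal fan of PF((1,2,…,n)): for every extreme point v of PF(u) there exists a set S of extreme points of PF((1,2,…,n)) (the stellahedron) such that ncone(v, PF(u)) = ⋃_{w ∈ S} ncone(w, PF((1,2,…,n))). Hence PF(u) is a deformation of PF((1,2,…,n)). -/
noncomputable section

/-- `a` is a `u`-parking function. -/
def IsParkingFunction (n : ℕ) (u a : Fin n → ℝ) : Prop :=
  (∀ i, 0 ≤ a i) ∧
    ∃ σ : Equiv.Perm (Fin n), Monotone (fun i => a (σ i)) ∧ ∀ i, a (σ i) ≤ u i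

/-- The parking function polytope. -/
def PF (n : ℕ) (u : Fin n → ℝ) : Set (Fin n → ℝ) :=
  convexHull ℝ {a | IsParkingFunction n u a}

/-- The normal cone of `P` at `v`. -/
def ncone (n : ℕ) (P : Set (Fin n → ℝ)) (v : Fin n → ℝ) : Set (Fin n → ℝ) :=
  {w | ∀ y ∈ P, ∑ i, w i * y i ≤ ∑ i, w i * v i}

/-- The vector `(1, 2, …, n)`. -/
def stdU (n : ℕ) : Fin n → ℝ := fun i => (i : ℕ) + 1

/-- The cone of vectors that are nonpositive on the first `p.2` entries along `p.1` and then
nonnegative and increasing. -/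
def stC (n : ℕ) (p : Equiv.Perm (Fin n) × Fin (n+1)) : Set (Fin n → ℝ) :=
  {w | (∀ i : Fin n, (i:ℕ) < p.2 → w (p.1 i) ≤ 0) ∧
    (∀ i : Fin n, (p.2:ℕ) ≤ i → 0 ≤ w (p.1 i)) ∧
    (∀ i j : Fin n, (p.2:ℕ) ≤ i → i ≤ j → w (p.1 i) ≤ w (p.1 j))}

/-- The candidate vertices. -/
def stY (n : ℕ) (u : Fin n → ℝ) (p : Equiv.Perm (Fin n) × Fin (n+1)) : Fin n → ℝ :=
  fun j => if ((p.1.symm j : Fin n) : ℕ) < p.2 then 0 else u (p.1.symm j)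

lemma stC_closed (n : ℕ) (p) : IsClosed (stC n p) := by
  unfold stC
  simp only [Set.setOf_and, Set.setOf_forall]
  refine IsClosed.inter ?_ (IsClosed.inter ?_ ?_)
  · exact isClosed_iInter fun i => isClosed_iInter fun _ => isClosed_le (by fun_prop) (by fun_prop)
  · exact isClosed_iInter fun i => isClosed_iInter fun _ => isClosed_le (by fun_prop) (by fun_prop)
  · exact isClosed_iInter fun i => isClosed_iInter fun _ => isClosed_iInter fun _ =>
      isClosed_iInter fun _ => isClosed_le (by fun_prop) (by fun_prop)

lemma stC_cover (n : ℕ) (w : Fin n → ℝ) : ∃ p, w ∈ stC n p := by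
  classical
  have hm : Monotone (w ∘ Tuple.sort w) := Tuple.monotone_sort w
  set τ := Tuple.sort w with hτ
  have hex : ∃ m : ℕ, ∀ i : Fin n, m ≤ i → 0 ≤ w (τ i) := ⟨n, fun i hi => by omega⟩
  have hle : Nat.find hex ≤ n := Nat.find_min' hex (fun i hi => by omega)
  refine ⟨(τ, ⟨Nat.find hex, by omega⟩), ?_, ?_, ?_⟩
  · intro i hi
    have h := Nat.find_min hex hi
    push Not at h
    obtain ⟨j, hj, hj'⟩ := h
    exact (hm (Fin.le_def.2 hj)).trans hj'.le
  · intro i hi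
    exact Nat.find_spec hex i hi
  · intro i j _ hij
    exact hm hij

lemma stY_apply (n : ℕ) (u : Fin n → ℝ) (p) (i : Fin n) :
    stY n u p (p.1 i) = if (i : ℕ) < p.2 then 0 else u i := by
  simp [stY]

lemma stY_sum (n : ℕ) (u w : Fin n → ℝ) (p) :
    ∑ j, w j * stY n u p j = ∑ i, w (p.1 i) * (if (i : ℕ) < p.2 then 0 else u i) := by
  rw [← Equiv.sum_comp p.1]
  simp only [stY_apply]

lemma stY_parking (n : ℕ) (u : Fin n → ℝ) (hmono : Monotone u) (h0 : ∀ i, 0 ≤ u i) (p) :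
    IsParkingFunction n u (stY n u p) := by
  refine ⟨fun i => ?_, p.1, ?_, ?_⟩
  · unfold stY; split_ifs; exacts [le_rfl, h0 _]
  · intro i j hij
    have := hmono hij
    have hij' : (i:ℕ) ≤ j := hij
    simp only [stY_apply]
    split_ifs
    · exact le_rfl
    · exact h0 _
    · omega
    · exact this
  · intro i
    rw [stY_apply]
    split_ifs; exacts [h0 _, le_rfl]

lemma stY_mem (n : ℕ) (u : Fin n → ℝ) (hmono : Monotone u) (h0 : ∀ i, 0 ≤ u i) (p) :
    stY n u p ∈ PF n u := subset_convexHull ℝ _ (stY_parking n u hmono h0 p)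

lemma stKey (n : ℕ) (u : Fin n → ℝ) (hmono : Monotone u) (h0 : ∀ i, 0 ≤ u i) (p)
    (w : Fin n → ℝ) (hw : w ∈ stC n p) (a : Fin n → ℝ) (ha : IsParkingFunction n u a) :
    ∑ i, w i * a i ≤ ∑ i, w i * stY n u p i := by
  obtain ⟨ha0, σ, -, hσ⟩ := ha
  obtain ⟨h1, h2, h3⟩ := hw
  have hmon : Monovary u (fun i => max (w (p.1 i)) 0) := by
    refine hmono.monovary ?_
    intro i j hij
    have hij' : (i:ℕ) ≤ j := hij
    by_cases hi : (i:ℕ) < p.2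
    · simp [h1 i hi]
    · exact max_le_max (h3 i j (by omega) hij) le_rfl
  calc ∑ i, w i * a i ≤ ∑ i, max (w i) 0 * a i :=
        Finset.sum_le_sum fun i _ => mul_le_mul_of_nonneg_right (le_max_left _ _) (ha0 i)
    _ = ∑ i, max (w (σ i)) 0 * a (σ i) := (Equiv.sum_comp σ (fun i => max (w i) 0 * a i)).symm
    _ ≤ ∑ i, max (w (σ i)) 0 * u i :=
        Finset.sum_le_sum fun i _ => mul_le_mul_of_nonneg_left (hσ i) (le_max_right _ _)
    _ = ∑ i, u i * max (w (p.1 ((σ.trans p.1.symm) i))) 0 := by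
        simp [mul_comm]
    _ ≤ ∑ i, u i * max (w (p.1 i)) 0 := hmon.sum_mul_comp_perm_le_sum_mul
    _ = ∑ i, w i * stY n u p i := by
        rw [stY_sum]
        refine Finset.sum_congr rfl fun i _ => ?_
        split_ifs with hi
        · simp [h1 i hi]
        · rw [max_eq_left (h2 i (by omega)), mul_comm]

lemma st_isLin (n : ℕ) (w : Fin n → ℝ) :
    IsLinearMap ℝ (fun y : Fin n → ℝ => ∑ i, w i * y i) := by
  constructor
  · intro x y; simp [mul_add, Finset.sum_add_distrib]
  · intro c x; simp [Finset.mul_sum, mul_left_comm]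

lemma stC_sub (n : ℕ) (u : Fin n → ℝ) (hmono : Monotone u) (h0 : ∀ i, 0 ≤ u i) (p) :
    stC n p ⊆ ncone n (PF n u) (stY n u p) := by
  intro w hw
  have : PF n u ⊆ {y | ∑ i, w i * y i ≤ ∑ i, w i * stY n u p i} :=
    convexHull_min (fun a ha => stKey n u hmono h0 p w hw a ha)
      (convex_halfSpace_le (st_isLin n w) _)
  exact fun y hy => this hy

lemma stdU_mono (n : ℕ) : Monotone (stdU n) := by
  intro i j hij
  have : (i:ℕ) ≤ j := hij
  simp only [stdU]
  have : ((i:ℕ):ℝ) ≤ (j:ℕ) := by exact_mod_cast this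
  linarith

lemma stdU_nonneg (n : ℕ) (i) : 0 ≤ stdU n i := by unfold stdU; positivity

lemma stNcone_sub (n : ℕ) (p) :
    ncone n (PF n (stdU n)) (stY n (stdU n) p) ⊆ stC n p := by
  classical
  intro w hw
  have hw' : ∀ q, ∑ i, w i * stY n (stdU n) q i ≤ ∑ i, w i * stY n (stdU n) p i :=
    fun q => hw _ (stY_mem n _ (stdU_mono n) (stdU_nonneg n) q)
  obtain ⟨τ, m, hm⟩ := p
  have hswap : ∀ i j : Fin n, m ≤ i → i ≤ j → w (τ i) ≤ w (τ j) := by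
    intro i j hi hij
    rcases hij.eq_or_lt with rfl | hlt
    · exact le_rfl
    have hlt' : (i:ℕ) < j := hlt
    have h := hw' ((Equiv.swap i j).trans τ, ⟨m, hm⟩)
    rw [stY_sum, ← Equiv.sum_comp (Equiv.swap i j), stY_sum, ← sub_nonpos,
      ← Finset.sum_sub_distrib] at h
    simp only [Equiv.trans_apply, Equiv.swap_apply_self] at h
    have e : ∀ k : Fin n, (w (τ k) * (if ((Equiv.swap i j k : Fin n):ℕ) < m then 0
        else stdU n (Equiv.swap i j k)) - w (τ k) * (if (k:ℕ) < m then 0 else stdU n k))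
        = (if k = i then w (τ i) * ((j:ℕ) - (i:ℕ) : ℝ) else 0)
          + (if k = j then w (τ j) * ((i:ℕ) - (j:ℕ) : ℝ) else 0) := by
      intro k
      by_cases hki : k = i
      · subst hki
        have h1 : ¬ (j:ℕ) < m := by omega
        have h2 : ¬ (k:ℕ) < m := by omega
        simp only [Equiv.swap_apply_left, h1, h2, if_false, if_true, hlt.ne, stdU]
        ring
      · by_cases hkj : k = j
        · subst hkj
          have h1 : ¬ (i:ℕ) < m := by omega
          have h2 : ¬ (k:ℕ) < m := by omega
          simp only [Equiv.swap_apply_right, h1, h2, if_false, if_true, hlt.ne', stdU]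
          ring
        · simp [Equiv.swap_apply_of_ne_of_ne hki hkj, hki, hkj]
    rw [Finset.sum_congr rfl (fun k _ => e k), Finset.sum_add_distrib] at h
    simp only [Finset.sum_ite_eq', Finset.mem_univ, if_true] at h
    have : (0:ℝ) < (j:ℕ) - (i:ℕ) := by
      have : ((i:ℕ):ℝ) < (j:ℕ) := by exact_mod_cast hlt'
      linarith
    nlinarith
  refine ⟨?_, ?_, hswap⟩
  · intro i hi
    change (i:ℕ) < m at hi
    have hmn : m - 1 < n := by omega
    have h := hw' ((Equiv.swap i ⟨m-1, hmn⟩).trans τ, ⟨m-1, by omega⟩)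
    rw [stY_sum, ← Equiv.sum_comp (Equiv.swap i ⟨m-1, hmn⟩), stY_sum, ← sub_nonpos,
      ← Finset.sum_sub_distrib] at h
    simp only [Equiv.trans_apply, Equiv.swap_apply_self] at h
    have e : ∀ k : Fin n, (w (τ k) * (if ((Equiv.swap i ⟨m-1, hmn⟩ k : Fin n):ℕ) < m-1 then 0
        else stdU n (Equiv.swap i ⟨m-1, hmn⟩ k)) - w (τ k) * (if (k:ℕ) < m then 0 else stdU n k))
        = (if k = i then w (τ i) * stdU n ⟨m-1, hmn⟩ else 0) := by
      intro k
      by_cases hki : k = i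
      · subst hki
        simp [hi]
      · by_cases hkj : k = ⟨m-1, hmn⟩
        · have h1 : (i:ℕ) < m - 1 := by
            have h3 : (i:ℕ) ≠ m - 1 := fun h => hki (hkj.trans (Fin.ext h.symm))
            omega
          have h2 : (k:ℕ) < m := by rw [hkj]; simp; omega
          simp only [hki, h2, if_true, if_false]
          rw [hkj, Equiv.swap_apply_right]
          simp [h1]
        · have h3 : (k:ℕ) ≠ m - 1 := fun h => hkj (Fin.ext h)
          have h4 : ((k:ℕ) < m - 1) ↔ (k:ℕ) < m := by omega
          simp [Equiv.swap_apply_of_ne_of_ne hki hkj, hki, h4]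
    rw [Finset.sum_congr rfl (fun k _ => e k)] at h
    simp only [Finset.sum_ite_eq', Finset.mem_univ, if_true] at h
    have : (0:ℝ) < stdU n ⟨m-1, hmn⟩ := by unfold stdU; positivity
    nlinarith
  · intro i hi
    change m ≤ (i:ℕ) at hi
    have hmn : m < n := by omega
    refine le_trans ?_ (hswap ⟨m, hmn⟩ i le_rfl (Fin.le_def.2 hi))
    have h := hw' (τ, ⟨m+1, by omega⟩)
    rw [stY_sum, stY_sum, ← sub_nonpos, ← Finset.sum_sub_distrib] at h
    have e : ∀ k : Fin n, (w (τ k) * (if (k:ℕ) < m+1 then 0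
        else stdU n k) - w (τ k) * (if (k:ℕ) < m then 0 else stdU n k))
        = (if k = ⟨m, hmn⟩ then - (w (τ ⟨m, hmn⟩) * stdU n ⟨m, hmn⟩) else 0) := by
      intro k
      by_cases hki : k = ⟨m, hmn⟩
      · subst hki
        simp
      · have h3 : (k:ℕ) ≠ m := fun h => hki (Fin.ext h)
        have h4 : ((k:ℕ) < m + 1) ↔ (k:ℕ) < m := by omega
        simp [hki, h4]
    simp only at h
    rw [Finset.sum_congr rfl (fun k _ => e k)] at h
    simp only [Finset.sum_ite_eq', Finset.mem_univ, if_true] at h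
    have : (0:ℝ) < stdU n ⟨m, hmn⟩ := by unfold stdU; positivity
    nlinarith

lemma stY_extreme (n : ℕ) (u : Fin n → ℝ) (hmono : Monotone u) (h0 : ∀ i, 0 ≤ u i) (p) :
    stY n u p ∈ Set.extremePoints ℝ (PF n u) := by
  classical
  rw [mem_extremePoints_iff_left]
  refine ⟨stY_mem n u hmono h0 p, ?_⟩
  intro x hx y hy hxy
  have hC : ∀ w ∈ stC n p, ∑ i, w i * x i = ∑ i, w i * stY n u p i := by
    intro w hw
    have hxw := stC_sub n u hmono h0 p hw x hx
    have hyw := stC_sub n u hmono h0 p hw y hy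
    obtain ⟨a, b, ha, hb, hab, he⟩ := hxy
    have hl := st_isLin n w
    have e : a * (∑ i, w i * x i) + b * (∑ i, w i * y i) = ∑ i, w i * stY n u p i := by
      rw [← he]
      have := hl.map_add (a • x) (b • y)
      rw [hl.map_smul, hl.map_smul] at this
      simpa using this.symm
    have hb' : b = 1 - a := by linarith
    subst hb'
    nlinarith
  let w0 : Fin n → ℝ := fun j => 4 * ((p.1.symm j : Fin n) : ℕ) - 4 * ((p.2 : ℕ) : ℝ) + 2
  have hw : ∀ d : Fin n → ℝ, (∀ j, 0 ≤ d j ∧ d j ≤ 1) → (fun j => w0 j + d j) ∈ stC n p := by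
    intro d hd
    refine ⟨?_, ?_, ?_⟩
    · intro i hi
      have := hd (p.1 i)
      have h : ((i:ℕ):ℝ) + 1 ≤ (p.2:ℕ) := by exact_mod_cast hi
      simp only [w0, Equiv.symm_apply_apply]
      linarith
    · intro i hi
      have := hd (p.1 i)
      have h : ((p.2:ℕ):ℝ) ≤ (i:ℕ) := by exact_mod_cast hi
      simp only [w0, Equiv.symm_apply_apply]
      linarith
    · intro i j hi hij
      rcases hij.eq_or_lt with rfl | hlt
      · exact le_rfl
      have h1 := hd (p.1 i)
      have h2 := hd (p.1 j)
      have hlt' : (i:ℕ) < j := hlt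
      have h : ((i:ℕ):ℝ) + 1 ≤ (j:ℕ) := by exact_mod_cast hlt'
      simp only [w0, Equiv.symm_apply_apply]
      linarith
  have hz := hC _ (hw (fun _ => 0) (by simp))
  funext j
  have hj := hC _ (hw (Pi.single j 1) (by
    intro k
    by_cases h : k = j
    · subst h; simp
    · simp [h]))
  simp only [add_mul, Finset.sum_add_distrib, Pi.single_apply, ite_mul, one_mul, zero_mul,
    Finset.sum_ite_eq', Finset.mem_univ, if_true, Finset.sum_const_zero] at hz hj
  linarith

lemma st_rep (n : ℕ) (f : (Fin n → ℝ) →L[ℝ] ℝ) (x : Fin n → ℝ) :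
    f x = ∑ i, f (Pi.single i 1) * x i := by
  have := f.toLinearMap.pi_apply_eq_sum_univ x
  simp only [ContinuousLinearMap.coe_coe, smul_eq_mul] at this
  rw [this]
  refine Finset.sum_congr rfl fun i _ => ?_
  rw [mul_comm]
  congr 2
  funext j
  simp [Pi.single_apply, eq_comm]

lemma st_sep (n : ℕ) (F : Set (Fin n → ℝ)) (hF : F.Finite) (v : Fin n → ℝ)
    (hv : v ∉ convexHull ℝ F) :
    ∃ w : Fin n → ℝ, ∀ y ∈ F, ∑ i, w i * y i < ∑ i, w i * v i := by
  obtain ⟨f, c, h1, h2⟩ := geometric_hahn_banach_closed_point (convex_convexHull ℝ F)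
    (hF.isClosed_convexHull ℝ) hv
  refine ⟨fun i => f (Pi.single i 1), fun y hy => ?_⟩
  rw [← st_rep, ← st_rep]
  exact (h1 y (subset_convexHull ℝ _ hy)).trans h2

/-- The normal fan of every parking function polytope coarsens the normal fan of
`PF((1,2,…,n))`: for each extreme point `v` of `PF(u)` there is a set `S` of
extreme points of the stellahedron `PF((1,2,…,n))` whose normal cones union to
the normal cone of `PF(u)` at `v`.  Hence `PF(u)` is a deformation of
`PF((1,2,…,n))`. -/
theorem normal_fan_coarsens_stellahedron
    (n : ℕ) (hn : 1 ≤ n) (u : Fin n → ℝ)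
    (hmono : Monotone u) (hnonneg : ∀ i, 0 ≤ u i) (hne : u ≠ 0) :
    ∀ v ∈ Set.extremePoints ℝ (PF n u),
      ∃ S ⊆ Set.extremePoints ℝ (PF n (stdU n)),
        ncone n (PF n u) v = ⋃ w ∈ S, ncone n (PF n (stdU n)) w := by
  intro v hv
  have hvF : ∃ w0 : Fin n → ℝ, ∀ p, stY n u p ≠ v →
      ∑ i, w0 i * stY n u p i < ∑ i, w0 i * v i := by
    have h := (Convex.mem_extremePoints_iff_mem_diff_convexHull_diff
      (convex_convexHull ℝ _ : Convex ℝ (PF n u))).1 hv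
    have h2 : v ∉ convexHull ℝ (Set.range (stY n u) \ {v}) := by
      intro h3
      refine h.2 (convexHull_mono ?_ h3)
      rintro _ ⟨⟨p, rfl⟩, hp⟩
      exact ⟨stY_mem n u hmono hnonneg p, hp⟩
    obtain ⟨w0, hw0⟩ := st_sep n _ ((Set.finite_range _).subset Set.diff_subset) v h2
    exact ⟨w0, fun p hp => hw0 _ ⟨⟨p, rfl⟩, hp⟩⟩
  obtain ⟨w0, hw0⟩ := hvF
  refine ⟨{x | ∃ p, stY n u p = v ∧ stY n (stdU n) p = x}, ?_, ?_⟩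
  · rintro _ ⟨p, -, rfl⟩
    exact stY_extreme n _ (stdU_mono n) (stdU_nonneg n) p
  · apply Set.Subset.antisymm
    · intro w hw
      have hev : ∀ᶠ ε : ℝ in nhdsWithin 0 (Set.Ioi 0),
          ∀ p, w ∉ stC n p → w + ε • w0 ∉ stC n p := by
        rw [Filter.eventually_all]
        intro p
        by_cases hp : w ∈ stC n p
        · simp [hp]
        · have hc : Continuous (fun ε : ℝ => w + ε • w0) := by fun_prop
          have ho := ((stC_closed n p).isOpen_compl.preimage hc).mem_nhds
            (x := (0:ℝ)) (by simpa using hp)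
          filter_upwards [mem_nhdsWithin_of_mem_nhds ho] with ε hε _
          exact hε
      obtain ⟨ε, hε, hε0⟩ := (hev.and self_mem_nhdsWithin).exists
      replace hε0 : 0 < ε := hε0
      obtain ⟨p, hp⟩ := stC_cover n (w + ε • w0)
      have hwp : w ∈ stC n p := by
        by_contra hcon
        exact hε p hcon hp
      have hpv : stY n u p = v := by
        by_contra hcon
        have h1 := hw0 p hcon
        have h2 := hw _ (stY_mem n u hmono hnonneg p)
        have h3 := stC_sub n u hmono hnonneg p hp v hv.1
        simp only [Pi.add_apply, Pi.smul_apply, smul_eq_mul, add_mul, Finset.sum_add_distrib,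
          mul_assoc, ← Finset.mul_sum] at h3
        have := mul_lt_mul_of_pos_left h1 hε0
        linarith
      simp only [Set.mem_iUnion]
      exact ⟨_, ⟨p, hpv, rfl⟩, stC_sub n _ (stdU_mono n) (stdU_nonneg n) p hwp⟩
    · intro w hw
      simp only [Set.mem_iUnion] at hw
      obtain ⟨_, ⟨p, hpv, rfl⟩, hw⟩ := hw
      rw [← hpv]
      exact stC_sub n u hmono hnonneg p (stNcone_sub n p hw)
end
end

section
/- PF(u) is a simple polytope — equivalently, for every extreme point v of PF(u) the normal cone ncone(v, PF(u)) is a full-dimensional simplicial cone — if and only if the multiplicity vector m(u) = (m_0, m_1, …, m_ℓ) satisfies m(u) = (0, n), or m(u) = (n−1, 1), or ℓ ≥ 2 and m_1 = m_2 = ⋯ = m_{ℓ−1} = 1. -/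
noncomputable section

/-- `σ` is a full-dimensional simplicial cone in `ℝⁿ`: generated by `n`
linearly independent vectors. -/
def IsSimplicialFullCone (n : ℕ) (σ : Set (Fin n → ℝ)) : Prop :=
  ∃ r : Fin n → (Fin n → ℝ), LinearIndependent ℝ r ∧
    σ = {x | ∃ lam : Fin n → ℝ, (∀ i, 0 ≤ lam i) ∧ x = ∑ i, lam i • r i}

lemma parking_of_relaxed {n : ℕ} {u a : Fin n → ℝ} (hmono : Monotone u)
    (h0 : ∀ i, 0 ≤ a i) (σ : Equiv.Perm (Fin n)) (h : ∀ i, a (σ i) ≤ u i) :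
    IsParkingFunction n u a := by
  refine ⟨h0, Tuple.sort a, Tuple.monotone_sort a, ?_⟩
  intro i
  by_contra hlt
  push Not at hlt
  have hm := Tuple.monotone_sort a
  -- the two index sets are disjoint but too large
  let A : Finset (Fin n) := (Finset.Ici i).map (Tuple.sort a).toEmbedding
  let B : Finset (Fin n) := (Finset.Iic i).map σ.toEmbedding
  have hdisj : Disjoint A B := by
    rw [Finset.disjoint_left]
    intro x hx hy
    simp only [A, B, Finset.mem_map, Finset.mem_Ici, Finset.mem_Iic,
      Equiv.coe_toEmbedding] at hx hy
    obtain ⟨p, hp, rfl⟩ := hx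
    obtain ⟨q, hq, hqe⟩ := hy
    have h1 : a (Tuple.sort a i) ≤ a (Tuple.sort a p) := hm hp
    have h2 := h q
    rw [hqe] at h2
    have h3 := hmono hq
    linarith
  have hc := Finset.card_union_of_disjoint hdisj
  have hle := Finset.card_le_univ (A ∪ B)
  simp only [A, B, Finset.card_map, Fin.card_Ici, Fin.card_Iic, Fintype.card_fin] at hc hle
  have := i.2
  omega

lemma mem_ncone_iff {n : ℕ} {u v w : Fin n → ℝ} :
    w ∈ ncone n (PF n u) v ↔
      ∀ y, IsParkingFunction n u y → ∑ i, w i * y i ≤ ∑ i, w i * v i := by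
  constructor
  · intro h y hy
    exact h y (subset_convexHull ℝ _ hy)
  · intro h y hy
    have hconv : Convex ℝ {y : Fin n → ℝ | ∑ i, w i * y i ≤ ∑ i, w i * v i} := by
      intro x hx y hy a b ha hb hab
      simp only [Set.mem_ofPred_eq] at *
      have : ∑ i, w i * (a • x + b • y) i = a * ∑ i, w i * x i + b * ∑ i, w i * y i := by
        rw [Finset.mul_sum, Finset.mul_sum, ← Finset.sum_add_distrib]
        refine Finset.sum_congr rfl fun i _ => ?_
        simp only [Pi.add_apply, Pi.smul_apply, smul_eq_mul]
        ring
      rw [this]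
      have hb' : b = 1 - a := by linarith
      calc _ ≤ a * (∑ i, w i * v i) + b * (∑ i, w i * v i) := by gcongr
        _ = _ := by rw [hb']; ring
    exact convexHull_min (fun y hy => h y hy) hconv hy

lemma parking_perm {n : ℕ} {u y : Fin n → ℝ} (σ : Equiv.Perm (Fin n))
    (h : IsParkingFunction n u y) : IsParkingFunction n u (y ∘ σ) := by
  obtain ⟨h0, τ, h1, h2⟩ := h
  refine ⟨fun i => h0 _, τ.trans σ.symm, ?_, ?_⟩
  · simpa using h1
  · simpa using h2

lemma mem_ncone_perm {n : ℕ} {u v w : Fin n → ℝ} (σ : Equiv.Perm (Fin n)) :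
    w ∈ ncone n (PF n u) v ↔ w ∘ σ ∈ ncone n (PF n u) (v ∘ σ) := by
  rw [mem_ncone_iff, mem_ncone_iff]
  have key : ∀ y : Fin n → ℝ, ∑ i, (w ∘ σ) i * (y ∘ σ) i = ∑ i, w i * y i := fun y =>
    Equiv.sum_comp σ (fun i => w i * y i)
  rw [key v]
  constructor
  · intro h y hy
    have := h (y ∘ σ.symm) (parking_perm _ hy)
    rw [← key] at this
    simpa [Function.comp_assoc] using this
  · intro h y hy
    rw [← key y]
    exact h _ (parking_perm σ hy)

lemma ncone_char {n : ℕ} {u v w : Fin n → ℝ} (hmono : Monotone u) (hnonneg : ∀ i, 0 ≤ u i)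
    (hv : Monotone v) (huv : ∀ i, v i = 0 ∨ v i = u i) :
    w ∈ ncone n (PF n u) v ↔
      (∀ i, 0 < v i → 0 ≤ w i) ∧
      (∀ i, v i = 0 → (∃ m, v m = 0 ∧ 0 < u m) → w i ≤ 0) ∧
      (∀ i j, 0 < v j → u i < u j → w i ≤ w j) := by
  have hv0 : ∀ i, 0 ≤ v i := fun i => by rcases huv i with h | h <;> rw [h]; exact hnonneg i
  have hvu : ∀ i, v i ≤ u i := fun i => by rcases huv i with h | h <;> rw [h]; exact hnonneg i
  have hvpos : ∀ i, 0 < v i → v i = u i := fun i hi => by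
    rcases huv i with h | h
    · linarith
    · exact h
  rw [mem_ncone_iff]
  constructor
  · intro h
    refine ⟨?_, ?_, ?_⟩
    · intro i hi
      have hp : IsParkingFunction n u (Function.update v i 0) := by
        refine parking_of_relaxed hmono ?_ (Equiv.refl _) ?_
        · intro j
          by_cases hj : j = i
          · subst hj; simp
          · simp [hj, hv0]
        · intro j
          by_cases hj : j = i
          · subst hj; simp [hnonneg]
          · simp [hj, hvu]
      have := h _ hp
      rw [← sub_nonneg, ← Finset.sum_sub_distrib, Finset.sum_eq_single i] at this
      · simp only [Function.update_self] at this
        by_contra hc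
        push Not at hc
        nlinarith
      · intro j _ hj
        simp [hj]
      · simp
    · rintro i hi ⟨m, hm0, hm⟩
      have hp : IsParkingFunction n u (Function.update v i (u m)) := by
        refine parking_of_relaxed hmono ?_ (Equiv.swap i m) ?_
        · intro j
          by_cases hj : j = i
          · subst hj; simp [hnonneg]
          · simp [hj, hv0]
        · intro j
          by_cases hj : j = m
          · subst hj; simp
          · by_cases hji : j = i
            · subst hji
              have : m ≠ j := fun h => hj h.symm
              simp [this, hm0, hnonneg]
            · rw [Equiv.swap_apply_of_ne_of_ne hji hj]
              simp [hji, hvu]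
      have := h _ hp
      rw [← sub_nonneg, ← Finset.sum_sub_distrib, Finset.sum_eq_single i] at this
      · simp only [Function.update_self, hi] at this
        by_contra hc
        push Not at hc
        nlinarith
      · intro j _ hj
        simp [hj]
      · simp
    · intro i j hj hij
      have hne : i ≠ j := by rintro rfl; exact lt_irrefl _ hij
      have hp : IsParkingFunction n u (v ∘ Equiv.swap i j) :=
        parking_of_relaxed hmono (fun i => hv0 _) (Equiv.swap i j) (by simpa using hvu)
      have := h _ hp
      rw [← sub_nonneg, ← Finset.sum_sub_distrib,
        Finset.sum_eq_add_of_mem i j (Finset.mem_univ _) (Finset.mem_univ _) hne] at this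
      · simp only [Function.comp_apply, Equiv.swap_apply_left, Equiv.swap_apply_right] at this
        have h1 := hvpos j hj
        have h2 := hvu i
        by_contra hc
        push Not at hc
        nlinarith [mul_pos (sub_pos.2 hc) (sub_pos.2 (show v i < v j by linarith))]
      · intro k _ hk
        simp [Equiv.swap_apply_of_ne_of_ne hk.1 hk.2]
  · rintro ⟨c1, c2, c3⟩ y ⟨hy0, σ, -, hσ⟩
    have hmv : Monovary (fun i => max (w i) 0) u := by
      intro i j hij
      simp only
      rcases (hv0 j).eq_or_lt with hj | hj
      · have hlt : i < j := by
          by_contra hc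
          exact absurd (hmono (not_lt.1 hc)) (not_le.2 hij)
        have hi : v i = 0 := le_antisymm (hj ▸ hv hlt.le) (hv0 i)
        have := c2 i hi ⟨j, hj.symm, lt_of_le_of_lt (hnonneg i) hij⟩
        rw [max_eq_right this]
        exact le_max_right _ _
      · exact max_le_max (c3 i j hj hij) le_rfl
    calc ∑ i, w i * y i = ∑ i, w (σ i) * y (σ i) := (Equiv.sum_comp σ (fun i => w i * y i)).symm
      _ ≤ ∑ i, max (w (σ i)) 0 * u i := by
        refine Finset.sum_le_sum fun i _ => ?_
        calc w (σ i) * y (σ i) ≤ max (w (σ i)) 0 * y (σ i) :=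
              mul_le_mul_of_nonneg_right (le_max_left _ _) (hy0 _)
          _ ≤ _ := mul_le_mul_of_nonneg_left (hσ i) (le_max_right _ _)
      _ ≤ ∑ i, max (w i) 0 * u i := hmv.sum_comp_perm_mul_le_sum_mul
      _ = ∑ i, w i * v i := by
        refine Finset.sum_congr rfl fun i _ => ?_
        rcases (hv0 i).eq_or_lt with hi | hi
        · rcases (hnonneg i).eq_or_lt with hu | hu
          · rw [← hi, ← hu]; simp
          · rw [max_eq_right (c2 i hi.symm ⟨i, hi.symm, hu⟩), ← hi]; simp
        · rw [max_eq_left (c1 i hi), hvpos i hi]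

lemma simplicial_of_functionals {n : ℕ} (C : Set (Fin n → ℝ))
    (f : Fin n → ((Fin n → ℝ) →ₗ[ℝ] ℝ)) (hC : ∀ w, w ∈ C ↔ ∀ i, 0 ≤ f i w)
    (hinj : ∀ w, (∀ i, f i w = 0) → w = 0) : IsSimplicialFullCone n C := by
  let F : (Fin n → ℝ) →ₗ[ℝ] (Fin n → ℝ) := LinearMap.pi f
  have hF : Function.Injective F := by
    rw [injective_iff_map_eq_zero]
    intro w hw
    exact hinj w (fun i => congrFun hw i)
  let E := LinearEquiv.ofInjectiveEndo F hF
  have hE : ∀ w i, E w i = f i w := fun w i => rfl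
  let b : Module.Basis (Fin n) ℝ (Fin n → ℝ) := (Pi.basisFun ℝ (Fin n)).map E.symm
  have hsum : ∀ lam : Fin n → ℝ, ∑ i, lam i • b i = E.symm lam := by
    intro lam
    apply E.injective
    simp only [b, map_sum, map_smul, Module.Basis.map_apply, LinearEquiv.apply_symm_apply]
    ext j
    simp [Pi.single_apply]
  refine ⟨b, b.linearIndependent, ?_⟩
  ext w
  rw [hC]
  constructor
  · intro h
    exact ⟨E w, fun i => by rw [hE]; exact h i, by rw [hsum]; simp⟩
  · rintro ⟨lam, hl, rfl⟩ i
    rw [hsum, ← hE]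
    simpa using hl i

lemma simplicial_perm {n : ℕ} {C : Set (Fin n → ℝ)} {D : Set (Fin n → ℝ)}
    (σ : Equiv.Perm (Fin n)) (h : ∀ w, w ∈ C ↔ w ∘ σ ∈ D)
    (hD : IsSimplicialFullCone n D) : IsSimplicialFullCone n C := by
  obtain ⟨r, hr, rfl⟩ := hD
  let E : (Fin n → ℝ) ≃ₗ[ℝ] (Fin n → ℝ) := LinearEquiv.funCongrLeft ℝ ℝ σ
  have hE : ∀ w, E w = w ∘ σ := fun w => rfl
  refine ⟨fun i => E.symm (r i), ?_, ?_⟩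
  · exact hr.map' E.symm.toLinearMap (LinearEquiv.ker _)
  · ext w
    rw [h, ← hE]
    simp only [Set.mem_ofPred_eq]
    refine exists_congr fun lam => and_congr_right fun _ => ?_
    rw [← E.symm.injective.eq_iff]
    simp [map_sum]

lemma riesz {n : ℕ} {C : Set (Fin n → ℝ)} (hC : IsSimplicialFullCone n C)
    {p q r s : Fin n → ℝ} (hp : p ∈ C) (hq : q ∈ C) (hr : r ∈ C) (hs : s ∈ C)
    (h : p + q = r + s) :
    ∃ a ∈ C, ∃ b ∈ C, ∃ c ∈ C, ∃ d ∈ C, a + b = p ∧ c + d = q ∧ a + c = r ∧ b + d = s := by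
  obtain ⟨e, he, rfl⟩ := hC
  obtain ⟨p, hp, rfl⟩ := hp
  obtain ⟨q, hq, rfl⟩ := hq
  obtain ⟨r, hr, rfl⟩ := hr
  obtain ⟨s, hs, rfl⟩ := hs
  have hh : ∀ i, p i + q i = r i + s i := by
    have h2 : ∑ i, (p i + q i - r i - s i) • e i = 0 := by
      simp only [sub_smul, add_smul, Finset.sum_sub_distrib, Finset.sum_add_distrib, h]
      abel
    intro i
    have := Fintype.linearIndependent_iff.1 he _ h2 i
    linarith
  refine ⟨_, ⟨fun i => min (p i) (r i), fun i => le_min (hp i) (hr i), rfl⟩,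
    _, ⟨fun i => p i - min (p i) (r i), fun i => sub_nonneg.2 (min_le_left _ _), rfl⟩,
    _, ⟨fun i => r i - min (p i) (r i), fun i => sub_nonneg.2 (min_le_right _ _), rfl⟩,
    _, ⟨fun i => s i - p i + min (p i) (r i), fun i => ?_, rfl⟩, ?_, ?_, ?_, ?_⟩
  · have := hh i
    have := hq i
    have := hs i
    show 0 ≤ s i - p i + min (p i) (r i)
    rcases min_choice (p i) (r i) with h | h <;> rw [h] <;> linarith
  all_goals
    rw [← Finset.sum_add_distrib]
    refine Finset.sum_congr rfl fun i _ => ?_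
    rw [← add_smul]
    congr 1
    have := hh i
    linarith

lemma u_extreme {n : ℕ} {u : Fin n → ℝ} (hmono : Monotone u) (hnonneg : ∀ i, 0 ≤ u i) :
    u ∈ Set.extremePoints ℝ (PF n u) := by
  have hu : IsParkingFunction n u u := ⟨hnonneg, Equiv.refl _, hmono, fun i => le_rfl⟩
  rw [mem_extremePoints_iff_left]
  refine ⟨subset_convexHull ℝ _ hu, ?_⟩
  rintro x hx y hy ⟨a, b, ha, hb, hab, hxy⟩
  have key : ∀ w : Fin n → ℝ, Monotone w → (∀ i, 0 ≤ w i) →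
      ∑ i, w i * x i = ∑ i, w i * u i := by
    intro w hw hw0
    have hc : w ∈ ncone n (PF n u) u := by
      rw [ncone_char hmono hnonneg hmono (fun i => Or.inr rfl)]
      refine ⟨fun i _ => hw0 i, ?_, ?_⟩
      · rintro i - ⟨m, h1, h2⟩
        linarith
      · intro i j _ hij
        refine hw (le_of_lt ?_)
        by_contra hc
        exact absurd (hmono (not_lt.1 hc)) (not_le.2 hij)
    have h1 := hc x hx
    have h2 := hc y hy
    have h3 : ∑ i, w i * u i = a * ∑ i, w i * x i + b * ∑ i, w i * y i := by
      rw [Finset.mul_sum, Finset.mul_sum, ← Finset.sum_add_distrib]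
      refine Finset.sum_congr rfl fun i _ => ?_
      rw [← hxy]
      simp only [Pi.add_apply, Pi.smul_apply, smul_eq_mul]
      ring
    have hb' : b = 1 - a := by linarith
    refine le_antisymm h1 ?_
    by_contra hlt
    push Not at hlt
    have t1 := mul_lt_mul_of_pos_left hlt ha
    have t2 := mul_le_mul_of_nonneg_left h2 hb.le
    rw [hb'] at h3 t2
    linarith
  ext j
  have e1 := key (fun i => if j ≤ i then 1 else 0)
    (by
      intro i k hik
      simp only
      split_ifs with h1 h2 <;> first | exact absurd (h1.trans hik) h2 | norm_num)
    (by intro i; split_ifs <;> norm_num)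
  have e2 := key (fun i => if j < i then 1 else 0)
    (by
      intro i k hik
      simp only
      split_ifs with h1 h2 <;> first | exact absurd (h1.trans_le hik) h2 | norm_num)
    (by intro i; split_ifs <;> norm_num)
  have e3 : ∀ z : Fin n → ℝ, ∑ i, (if j ≤ i then (1 : ℝ) else 0) * z i
      = z j + ∑ i, (if j < i then (1 : ℝ) else 0) * z i := by
    intro z
    have : z j = ∑ i, (if j = i then (1 : ℝ) else 0) * z i := by simp
    rw [this, ← Finset.sum_add_distrib]
    refine Finset.sum_congr rfl fun i _ => ?_
    rw [← add_mul]
    congr 1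
    rcases lt_trichotomy j i with h | h | h
    · simp [h, h.le, h.ne]
    · simp [h]
    · simp [h.not_ge, h.ne', h.not_gt]
  rw [e3, e3] at e1
  linarith

lemma extreme_form {n : ℕ} {u v : Fin n → ℝ} (hmono : Monotone u)
    (hv : v ∈ Set.extremePoints ℝ (PF n u)) :
    ∃ σ : Equiv.Perm (Fin n), Monotone (v ∘ σ) ∧ ∀ i, (v ∘ σ) i = 0 ∨ (v ∘ σ) i = u i := by
  have hp : IsParkingFunction n u v := by
    have hv' : v ∈ {a | IsParkingFunction n u a} := extremePoints_convexHull_subset hv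
    exact hv'
  obtain ⟨h0, σ, h1, h2⟩ := hp
  refine ⟨σ, h1, ?_⟩
  intro i
  by_contra hc
  push Not at hc
  simp only [Function.comp_apply] at hc
  have hpos : 0 < v (σ i) := lt_of_le_of_ne (h0 _) (Ne.symm hc.1)
  have hlt : v (σ i) < u i := lt_of_le_of_ne (h2 _) hc.2
  have hpark : ∀ t, 0 ≤ t → t ≤ u i → Function.update v (σ i) t ∈ PF n u := by
    intro t ht0 ht
    refine subset_convexHull ℝ _ (parking_of_relaxed hmono ?_ σ ?_)
    · intro j
      by_cases hj : j = σ i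
      · subst hj; simpa using ht0
      · simp [hj, h0]
    · intro j
      by_cases hj : j = i
      · subst hj; simpa using ht
      · simp [hj, h2]
  have hx := hpark 0 le_rfl (hpos.le.trans hlt.le)
  have hy := hpark (u i) (hpos.le.trans hlt.le) le_rfl
  have hui : 0 < u i := hpos.trans hlt
  have := (mem_extremePoints_iff_left.1 hv).2 _ hx _ hy
    ⟨1 - v (σ i) / u i, v (σ i) / u i, by
      rw [sub_pos, div_lt_one hui]; exact hlt, div_pos hpos hui, by ring, by
      ext j
      by_cases hj : j = σ i
      · subst hj
        simp
        field_simp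
      · simp [hj]
        ring⟩
  have h3 := congrFun this (σ i)
  simp at h3
  exact hc.1 h3.symm

lemma simplicial_good {n : ℕ} (hn : 1 ≤ n) {u v : Fin n → ℝ} (hmono : Monotone u)
    (hnonneg : ∀ i, 0 ≤ u i) (L : Fin n) (hle : ∀ i, u i ≤ u L) (hlast : 0 < u L)
    (hv : Monotone v) (huv : ∀ i, v i = 0 ∨ v i = u i)
    (H : ∀ i j, i ≠ j → 0 < u i → u i = u j → u i = u L ∧
      ((∀ k, 0 < u k) ∨ ∃ m, 0 < u m ∧ u m < u L)) :
    IsSimplicialFullCone n (ncone n (PF n u) v) := by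
  classical
  have hv0 : ∀ i, 0 ≤ v i := fun i => by rcases huv i with h | h <;> rw [h]; exact hnonneg i
  have hvpos : ∀ i, 0 < v i → v i = u i := fun i hi => by
    rcases huv i with h | h
    · linarith
    · exact h
  have hltu : ∀ {i j}, u i < u j → i < j := fun {i j} hij => by
    by_contra hc
    exact absurd (hmono (not_lt.1 hc)) (not_le.2 hij)
  -- first positive coordinate
  obtain ⟨f, hf⟩ : ∃ f : Fin n, (¬ ∃ m, v m = 0 ∧ 0 < u m) →
      0 < v f ∧ ∀ j, 0 < v j → f ≤ j := by
    by_cases hE : ∃ m, v m = 0 ∧ 0 < u m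
    · exact ⟨⟨0, hn⟩, fun h => absurd hE h⟩
    · have hne : (Finset.univ.filter fun j => 0 < v j).Nonempty := by
        refine ⟨L, ?_⟩
        simp only [Finset.mem_filter, Finset.mem_univ, true_and]
        refine lt_of_le_of_ne (hv0 _) fun h => hE ⟨_, h.symm, hlast⟩
      refine ⟨Finset.min' _ hne, fun _ => ⟨?_, ?_⟩⟩
      · have := Finset.min'_mem _ hne
        simpa using this
      · intro j hj
        exact Finset.min'_le _ _ (by simpa using hj)
  -- parent function
  have hpar : ∀ i, ∃ p : Fin n, (∃ j, 0 < v j ∧ u j < u i) →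
      (0 < v p ∧ u p < u i) ∧ ∀ j, 0 < v j → u j < u i → j ≤ p := by
    intro i
    by_cases hE : ∃ j, 0 < v j ∧ u j < u i
    · have hne : (Finset.univ.filter fun j => 0 < v j ∧ u j < u i).Nonempty := by
        obtain ⟨j, hj⟩ := hE
        exact ⟨j, by simpa using hj⟩
      refine ⟨Finset.max' _ hne, fun _ => ⟨?_, ?_⟩⟩
      · have := Finset.max'_mem _ hne
        simpa using this
      · intro j hj hj2
        exact Finset.le_max' _ _ (by simpa using ⟨hj, hj2⟩)
    · exact ⟨i, fun h => absurd h hE⟩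
  choose par hpar using hpar
  let pr : Fin n → ((Fin n → ℝ) →ₗ[ℝ] ℝ) := fun i => LinearMap.proj i
  let g : Fin n → ((Fin n → ℝ) →ₗ[ℝ] ℝ) := fun i =>
    if 0 < v i then
      (if ∃ j, 0 < v j ∧ u j < u i then pr i - pr (par i)
        else pr i)
    else
      (if ∃ m, v m = 0 ∧ 0 < u m then - pr i
        else pr f - pr i)
  have g1 : ∀ i w, 0 < v i → (∃ j, 0 < v j ∧ u j < u i) → g i w = w i - w (par i) := by
    intro i w h1 h2
    simp only [g, if_pos h1, if_pos h2]; rfl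
  have g2 : ∀ i w, 0 < v i → (¬ ∃ j, 0 < v j ∧ u j < u i) → g i w = w i := by
    intro i w h1 h2
    simp only [g, if_pos h1, if_neg h2]; rfl
  have g3 : ∀ i w, v i = 0 → (∃ m, v m = 0 ∧ 0 < u m) → g i w = - w i := by
    intro i w h1 h2
    simp only [g, if_neg (show ¬ 0 < v i by linarith), if_pos h2]; rfl
  have g4 : ∀ i w, v i = 0 → (¬ ∃ m, v m = 0 ∧ 0 < u m) → g i w = w f - w i := by
    intro i w h1 h2
    simp only [g, if_neg (show ¬ 0 < v i by linarith), if_neg h2]; rfl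
  have hchar := fun w => ncone_char (w := w) hmono hnonneg hv huv
  have main : ∀ w, w ∈ ncone n (PF n u) v ↔ ∀ i, 0 ≤ g i w := by
    intro w
    rw [hchar]
    constructor
    · rintro ⟨c1, c2, c3⟩ i
      rcases (hv0 i).eq_or_lt with hi | hi
      · by_cases hE : ∃ m, v m = 0 ∧ 0 < u m
        · rw [g3 i w hi.symm hE]
          linarith [c2 i hi.symm hE]
        · rw [g4 i w hi.symm hE]
          have h1 := (hf hE).1
          have h2 : u i ≤ 0 := by
            by_contra h
            exact hE ⟨i, hi.symm, not_le.1 h⟩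
          have h3 := hvpos f h1
          linarith [c3 i f h1 (by linarith)]
      · by_cases hE : ∃ j, 0 < v j ∧ u j < u i
        · rw [g1 i w hi hE]
          linarith [c3 (par i) i hi (hpar i hE).1.2]
        · rw [g2 i w hi hE]
          exact c1 i hi
    · intro h
      have step : ∀ i, 0 < v i → 0 ≤ w i ∧ ∀ j, 0 < v j → u j < u i → w j ≤ w i := by
        intro i
        induction i using WellFoundedLT.induction with
        | ind i ih =>
        intro hi
        have hgi := h i
        by_cases hE : ∃ j, 0 < v j ∧ u j < u i
        · rw [g1 i w hi hE] at hgi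
          obtain ⟨⟨hp1, hp2⟩, hp3⟩ := hpar i hE
          obtain ⟨ih1, ih2⟩ := ih (par i) (hltu hp2) hp1
          refine ⟨by linarith, ?_⟩
          intro j hj hji
          by_cases hjp : j = par i
          · rw [hjp]; linarith
          · have hle1 := hmono (hp3 j hj hji)
            have hlt : u j < u (par i) := by
              refine lt_of_le_of_ne hle1 fun heq => ?_
              have := (H j (par i) hjp (hvpos j hj ▸ hj) heq).1
              linarith [hle i]
            linarith [ih2 j hj hlt]
        · rw [g2 i w hi hE] at hgi
          exact ⟨hgi, fun j h1 h2 => absurd ⟨j, h1, h2⟩ hE⟩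
      refine ⟨fun i hi => (step i hi).1, ?_, ?_⟩
      · intro i hi hE
        have := h i
        rw [g3 i w hi hE] at this
        linarith
      · intro i j hj hij
        rcases (hv0 i).eq_or_lt with hi | hi
        · have hgi := h i
          by_cases hE : ∃ m, v m = 0 ∧ 0 < u m
          · rw [g3 i w hi.symm hE] at hgi
            linarith [(step j hj).1]
          · rw [g4 i w hi.symm hE] at hgi
            obtain ⟨hf1, hf2⟩ := hf hE
            by_cases hfj : f = j
            · rw [← hfj]; linarith
            · rcases (hmono (hf2 j hj)).eq_or_lt with heq | hlt
              · obtain ⟨e1, e2⟩ := H f j hfj (hvpos f hf1 ▸ hf1) heq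
                exfalso
                rcases e2 with e2 | ⟨m, hm1, hm2⟩
                · exact hE ⟨i, hi.symm, e2 i⟩
                · have hvm : 0 < v m :=
                    lt_of_le_of_ne (hv0 m) fun h => hE ⟨m, h.symm, hm1⟩
                  have := hmono (hf2 m hvm)
                  linarith
              · linarith [(step j hj).2 f hf1 hlt]
        · exact (step j hj).2 i hi hij
  refine simplicial_of_functionals _ g main ?_
  intro w hw
  have hw1 := (hchar w).1 ((main w).2 fun i => (hw i).ge)
  have hw2 := (hchar (-w)).1 ((main (-w)).2 fun i => by rw [map_neg, hw i]; simp)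
  have hz : ∀ i, 0 < v i → w i = 0 := by
    intro i hi
    have h1 := hw1.1 i hi
    have h2 := hw2.1 i hi
    simp only [Pi.neg_apply] at h2
    linarith
  ext i
  simp only [Pi.zero_apply]
  rcases (hv0 i).eq_or_lt with hi | hi
  · have hgi := hw i
    by_cases hE : ∃ m, v m = 0 ∧ 0 < u m
    · rw [g3 i w hi.symm hE] at hgi
      linarith
    · rw [g4 i w hi.symm hE] at hgi
      linarith [hz f (hf hE).1]
  · exact hz i hi

lemma u_cone {n : ℕ} {u w : Fin n → ℝ} (hmono : Monotone u) (hnonneg : ∀ i, 0 ≤ u i) :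
    w ∈ ncone n (PF n u) u ↔
      (∀ i, 0 < u i → 0 ≤ w i) ∧ (∀ i j, u i < u j → w i ≤ w j) := by
  rw [ncone_char hmono hnonneg hmono (fun i => Or.inr rfl)]
  constructor
  · rintro ⟨h1, -, h3⟩
    exact ⟨h1, fun i j hij => h3 i j ((hnonneg i).trans_lt hij) hij⟩
  · rintro ⟨h1, h3⟩
    refine ⟨h1, ?_, fun i j _ hij => h3 i j hij⟩
    rintro i - ⟨m, e1, e2⟩
    linarith

/-- A repeated positive non-maximal value obstructs simpliciality at `u`. -/
lemma bad_two {n : ℕ} {u : Fin n → ℝ} (hmono : Monotone u) (hnonneg : ∀ i, 0 ≤ u i)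
    {j k l : Fin n} (hjk : j ≠ k) (hj : 0 < u j) (heq : u k = u j) (hl : u j < u l) :
    ¬ IsSimplicialFullCone n (ncone n (PF n u) u) := by
  classical
  intro hS
  have hlj : l ≠ j := by rintro rfl; exact lt_irrefl _ hl
  have key := riesz hS
    (p := fun i => if u j < u i then 1 else if i = j then 1 else 0)
    (q := fun i => if u j < u i then 1 else if u i = u j ∧ i ≠ j then 1 else 0)
    (r := fun i => if u j ≤ u i then 1 else 0)
    (s := fun i => if u j < u i then 1 else 0) ?_ ?_ ?_ ?_ ?_
  · obtain ⟨a, ha, b, hb, c, hc, d, hd, e1, e2, e3, e4⟩ := key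
    rw [u_cone hmono hnonneg] at ha hb hc hd
    have e1j := congrFun e1 j
    have e4j := congrFun e4 j
    have e2k := congrFun e2 k
    have e4k := congrFun e4 k
    have e3l := congrFun e3 l
    simp [heq, hjk.symm, hl.le] at e1j e4j e2k e4k e3l
    have hk : 0 < u k := heq ▸ hj
    have hlk : u k < u l := heq ▸ hl
    linarith [hb.1 j hj, hd.1 j hj, hb.1 k hk, hd.1 k hk, ha.2 j l hl, hc.2 k l hlk]
  all_goals try rw [u_cone hmono hnonneg]
  all_goals try refine ⟨fun i hi => ?_, fun i i' hi => ?_⟩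
  all_goals try (split_ifs <;> grind)
  ext i
  simp only [Pi.add_apply]
  split_ifs <;> grind

/-- A single positive value with a zero and two positive positions. -/
lemma bad_one {n : ℕ} {u : Fin n → ℝ} (hmono : Monotone u) (hnonneg : ∀ i, 0 ≤ u i)
    {z j k : Fin n} (hjk : j ≠ k) (hz : u z = 0) (hj : 0 < u j)
    (hk : 0 < u k) (hone : ∀ i, 0 < u i → u i = u j) :
    ¬ IsSimplicialFullCone n (ncone n (PF n u) u) := by
  classical
  intro hS
  have hzj : z ≠ j := by rintro rfl; linarith
  have hzk : z ≠ k := by rintro rfl; linarith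
  have key := riesz hS
    (p := fun i => if i = j then 1 else 0)
    (q := fun i => if 0 < u i ∧ i ≠ j then 1 else 0)
    (r := fun i => if 0 < u i ∨ i = z then 1 else 0)
    (s := fun i => if i = z then -1 else 0) ?_ ?_ ?_ ?_ ?_
  · obtain ⟨a, ha, b, hb, c, hc, d, hd, e1, e2, e3, e4⟩ := key
    rw [u_cone hmono hnonneg] at ha hb hc hd
    have e1k := congrFun e1 k
    have e2j := congrFun e2 j
    have e3z := congrFun e3 z
    simp [hjk.symm] at e1k e2j e3z
    have hzj' : u z < u j := by linarith
    have hzk' : u z < u k := by linarith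
    linarith [ha.1 k hk, hb.1 k hk, hc.1 j hj, hd.1 j hj, ha.2 z k hzk', hc.2 z j hzj']
  all_goals try rw [u_cone hmono hnonneg]
  all_goals try refine ⟨fun i hi => ?_, fun i i' hi => ?_⟩
  all_goals try (split_ifs <;> grind)
  ext i
  simp only [Pi.add_apply]
  split_ifs <;> grind

/-- `PF(u)` is simple (the normal cone at every extreme point is a
full-dimensional simplicial cone) iff the multiplicity vector of `u` is
`(0,n)`, `(n-1,1)`, or has `ℓ ≥ 2` and `m₁ = ⋯ = m_{ℓ-1} = 1`.
Here `m(u) = (0,n)` means all coordinates of `u` equal some `d > 0`;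
`m(u) = (n-1,1)` means `u` has exactly `n-1` zero coordinates; the third case
says `u` has at least two distinct positive values and every positive value
other than the largest one `u_n` occurs exactly once. -/
theorem parking_polytope_simple_iff
    (n : ℕ) (hn : 1 ≤ n) (u : Fin n → ℝ)
    (hmono : Monotone u) (hnonneg : ∀ i, 0 ≤ u i) (hne : u ≠ 0) :
    (∀ v ∈ Set.extremePoints ℝ (PF n u),
        IsSimplicialFullCone n (ncone n (PF n u) v)) ↔
      ((∃ d : ℝ, 0 < d ∧ ∀ i, u i = d) ∨
        Nat.card {i : Fin n // u i = 0} = n - 1 ∨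
        ((∃ i j, 0 < u i ∧ 0 < u j ∧ u i ≠ u j) ∧
          ∀ i : Fin n, 0 < u i → u i ≠ u ⟨n - 1, by omega⟩ →
            Nat.card {j : Fin n // u j = u i} = 1)) := by
    classical
  have hle : ∀ i, u i ≤ u ⟨n - 1, by omega⟩ := fun i => hmono (by
    rw [Fin.le_def]; have := i.2; simp only; omega)
  have hlast : 0 < u ⟨n - 1, by omega⟩ := by
    by_contra hc
    exact hne (funext fun i => le_antisymm ((hle i).trans (not_lt.1 hc)) (hnonneg i))
  constructor
  · intro hall
    have hS := hall u (u_extreme hmono hnonneg)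
    by_contra hcon
    push Not at hcon
    obtain ⟨ha, hb, hc⟩ := hcon
    by_cases hE : ∃ i j, 0 < u i ∧ 0 < u j ∧ u i ≠ u j
    · obtain ⟨i, hi, hil, hcard⟩ := hc hE
      obtain ⟨k, hk, hki⟩ : ∃ k, u k = u i ∧ k ≠ i := by
        by_contra hno
        push Not at hno
        apply hcard
        rw [Nat.card_eq_one_iff_unique]
        exact ⟨⟨fun x y => Subtype.ext ((hno _ x.2).trans (hno _ y.2).symm)⟩, ⟨⟨i, rfl⟩⟩⟩
      exact bad_two hmono hnonneg hki.symm hi hk (lt_of_le_of_ne (hle i) hil) hS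
    · push Not at hE
      obtain ⟨z, hz⟩ := ha _ hlast
      have hz0 : u z = 0 := by
        by_contra h
        exact hz (hE _ _ (lt_of_le_of_ne (hnonneg z) (Ne.symm h)) hlast)
      obtain ⟨k, hk, hkl⟩ : ∃ k, 0 < u k ∧ k ≠ ⟨n - 1, by omega⟩ := by
        by_contra hno
        push Not at hno
        apply hb
        have hiff : ∀ i, u i = 0 ↔ i ≠ ⟨n - 1, by omega⟩ := by
          intro i
          constructor
          · rintro h rfl
            linarith
          · intro h
            by_contra h2
            exact h (hno i (lt_of_le_of_ne (hnonneg i) (Ne.symm h2)))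
        simp only [hiff]
        rw [Nat.card_eq_fintype_card]
        simp
      exact bad_one hmono hnonneg hkl.symm hz0 hlast hk (fun i hi => hE _ _ hi hlast) hS
  · intro hgood v hv
    obtain ⟨σ, hσ1, hσ2⟩ := extreme_form hmono hv
    refine simplicial_perm σ (fun w => mem_ncone_perm σ)
      (simplicial_good hn hmono hnonneg _ hle hlast hσ1 hσ2 ?_)
    intro i j hij hi heq
    rcases hgood with ⟨d, hd, hd2⟩ | hcard | ⟨⟨p, q, hp, hq, hpq⟩, hc⟩
    · exact ⟨by rw [hd2, hd2], Or.inl fun k => by rw [hd2]; exact hd⟩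
    · exfalso
      rw [Nat.card_eq_fintype_card, Fintype.card_subtype] at hcard
      have hsub : (Finset.univ.filter fun i => u i = 0) ⊆ Finset.univ \ {i, j} := by
        intro x hx
        simp only [Finset.mem_filter, Finset.mem_univ, true_and] at hx
        simp only [Finset.mem_sdiff, Finset.mem_univ, true_and, Finset.mem_insert,
          Finset.mem_singleton, not_or]
        constructor
        · rintro rfl
          linarith
        · rintro rfl
          linarith
      have h1 := Finset.card_le_card hsub
      rw [hcard, Finset.card_sdiff_of_subset (Finset.subset_univ _), Finset.card_pair hij] at h1
      have h2 : 2 ≤ n := by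
        have := Finset.card_le_univ ({i, j} : Finset (Fin n))
        rwa [Finset.card_pair hij, Fintype.card_fin] at this
      simp only [Finset.card_univ, Fintype.card_fin] at h1
      omega
    · constructor
      · by_contra hil
        have h1 := hc i hi hil
        rw [Nat.card_eq_one_iff_unique] at h1
        have := h1.1.elim ⟨i, rfl⟩ ⟨j, heq.symm⟩
        exact hij (congrArg Subtype.val this)
      · right
        by_cases hpl : u p = u ⟨n - 1, by omega⟩
        · exact ⟨q, hq, lt_of_le_of_ne (hle q) fun h => hpq (hpl.trans h.symm)⟩
        · exact ⟨p, hp, lt_of_le_of_ne (hle p) hpl⟩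
end
end

section
/- Let n ≥ 3. The parking function polytope PF(u) is simplicial — i.e., every facet of PF(u) contains exactly n extreme points of PF(u) — if and only if the multiplicity vector of u is m(u) = (n−1, 1), that is, u = (0,…,0,d) for some d > 0, in which case PF(u) is the simplex conv(0, d·e_1, …, d·e_n). -/
noncomputable section

/-- `F` is an exposed face of `P`. -/
def IsExposedFaceOf (n : ℕ) (P F : Set (Fin n → ℝ)) : Prop :=
  ∃ w : Fin n → ℝ, F = {x ∈ P | ∀ y ∈ P, ∑ i, w i * y i ≤ ∑ i, w i * x i}

/-- `F` is a facet of the `n`-dimensional polytope `P ⊆ ℝⁿ`. -/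
def IsFacetOf (n : ℕ) (P F : Set (Fin n → ℝ)) : Prop :=
  IsExposedFaceOf n P F ∧ F.Nonempty ∧
    Module.finrank ℝ (affineSpan ℝ F).direction = n - 1

theorem pk_single (n : ℕ) (u : Fin n → ℝ) (hnonneg : ∀ i, 0 ≤ u i) (L : Fin n)
    (hL : ∀ i, i ≤ L) (j : Fin n) : Pi.single j (u L) ∈ PF n u := by
  apply subset_convexHull
  refine ⟨fun i => ?_, Equiv.swap j L, ?_, ?_⟩
  · by_cases h : i = j
    · subst h; simpa using hnonneg L
    · simp [h]
  · have key : ∀ i, (Pi.single j (u L) : Fin n → ℝ) (Equiv.swap j L i) = if i = L then u L else 0 := by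
      intro i
      simp only [Pi.single_apply]
      congr 1
      rw [Equiv.swap_apply_eq_iff]; simp
    intro a b hab
    simp only [key]
    split_ifs with h1 h2 h2
    · rfl
    · exact absurd (le_antisymm (hL b) (h1 ▸ hab)) h2
    · exact hnonneg L
    · rfl
  · intro i
    have key : (Pi.single j (u L) : Fin n → ℝ) (Equiv.swap j L i) = if i = L then u L else 0 := by
      simp only [Pi.single_apply]
      congr 1
      rw [Equiv.swap_apply_eq_iff]; simp
    rw [key]
    split_ifs with h
    · rw [h]
    · exact hnonneg i

theorem pk_zero (n : ℕ) (u : Fin n → ℝ) (hnonneg : ∀ i, 0 ≤ u i) : (0 : Fin n → ℝ) ∈ PF n u := by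
  apply subset_convexHull
  exact ⟨fun i => le_rfl, 1, fun a b _ => le_rfl, fun i => hnonneg i⟩

theorem pk_nonneg (n : ℕ) (u : Fin n → ℝ) (x : Fin n → ℝ) (hx : x ∈ PF n u) (i : Fin n) :
    0 ≤ x i := by
  have hc : Convex ℝ {x : Fin n → ℝ | 0 ≤ x i} :=
    convex_halfSpace_ge (LinearMap.proj (R := ℝ) (φ := fun _ : Fin n => ℝ) i).isLinear 0
  exact convexHull_min (s := {a | IsParkingFunction n u a}) (fun a ha => ha.1 i) hc hx

theorem pk_le (n : ℕ) (u : Fin n → ℝ) (hmono : Monotone u) (L : Fin n)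
    (hL : ∀ i, i ≤ L) (x : Fin n → ℝ) (hx : x ∈ PF n u) (i : Fin n) :
    x i ≤ u L := by
  have hc : Convex ℝ {x : Fin n → ℝ | x i ≤ u L} :=
    convex_halfSpace_le (LinearMap.proj (R := ℝ) (φ := fun _ : Fin n => ℝ) i).isLinear _
  refine convexHull_min (s := {a | IsParkingFunction n u a}) (fun a ha => ?_) hc hx
  obtain ⟨_, σ, _, h⟩ := ha
  have := h (σ.symm i)
  rw [Equiv.apply_symm_apply] at this
  exact this.trans (hmono (hL _))

theorem pk_le2 (n : ℕ) (u : Fin n → ℝ) (hmono : Monotone u) (K L : Fin n)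
    (hL : ∀ i, i ≤ L) (hK : ∀ i, i ≠ L → i ≤ K)
    (x : Fin n → ℝ) (hx : x ∈ PF n u) (i j : Fin n) (hij : i ≠ j) :
    x i + x j ≤ u L + u K := by
  have hc : Convex ℝ {x : Fin n → ℝ | x i + x j ≤ u L + u K} :=
    convex_halfSpace_le (LinearMap.proj (R := ℝ) (φ := fun _ : Fin n => ℝ) i +
      LinearMap.proj (R := ℝ) (φ := fun _ : Fin n => ℝ) j).isLinear _
  refine convexHull_min (s := {a | IsParkingFunction n u a}) (fun a ha => ?_) hc hx
  obtain ⟨_, σ, _, h⟩ := ha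
  have h1 := h (σ.symm i)
  have h2 := h (σ.symm j)
  rw [Equiv.apply_symm_apply] at h1 h2
  show a i + a j ≤ _
  by_cases hi : σ.symm i = L
  · have hj : σ.symm j ≠ L := fun h => hij (σ.symm.injective (hi.trans h.symm))
    have := hmono (hK _ hj)
    have := hmono (hL (σ.symm i))
    linarith
  · have := hmono (hK _ hi)
    have := hmono (hL (σ.symm j))
    linarith

/-- In an open segment, if both ends satisfy a bound attained in the middle, both attain it. -/
theorem seg_eq {a b s t c : ℝ} (hs : 0 < s) (ht : 0 < t) (hst : s + t = 1)
    (ha : a ≤ c) (hb : b ≤ c) (h : s * a + t * b = c) : a = c := by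
  refine le_antisymm ha ?_
  by_contra hlt
  push Not at hlt
  have : s * a + t * b < s * c + t * c := by
    have := mul_lt_mul_of_pos_left hlt hs
    have := mul_le_mul_of_nonneg_left hb ht.le
    linarith
  have h2 : s * c + t * c = c := by rw [← add_mul, hst, one_mul]
  linarith

theorem seg_eq' {a b s t c : ℝ} (hs : 0 < s) (ht : 0 < t) (hst : s + t = 1)
    (ha : c ≤ a) (hb : c ≤ b) (h : s * a + t * b = c) : a = c := by
  have := seg_eq (a := -a) (b := -b) (c := -c) hs ht hst (by linarith) (by linarith) (by linarith)
  linarith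

theorem ext_box (n : ℕ) (u : Fin n → ℝ) (hmono : Monotone u) (L : Fin n)
    (hL : ∀ i, i ≤ L) (p : Fin n → ℝ) (hp : p ∈ PF n u) (h : ∀ i, p i = 0 ∨ p i = u L) :
    p ∈ Set.extremePoints ℝ (PF n u) := by
  rw [mem_extremePoints_iff_left]
  refine ⟨hp, fun y hy z hz ⟨s, t, hs, ht, hst, e⟩ => ?_⟩
  funext i
  have e' := congrFun e i
  simp only [Pi.add_apply, Pi.smul_apply, smul_eq_mul] at e'
  rcases h i with h | h
  · rw [h] at e' ⊢
    exact seg_eq' hs ht hst (pk_nonneg n u y hy i) (pk_nonneg n u z hz i) e'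
  · rw [h] at e' ⊢
    exact seg_eq hs ht hst (pk_le n u hmono L hL y hy i) (pk_le n u hmono L hL z hz i) e'

theorem ext_two (n : ℕ) (u : Fin n → ℝ) (hmono : Monotone u) (K L : Fin n) (hKL : K ≠ L)
    (hL : ∀ i, i ≤ L) (hK : ∀ i, i ≠ L → i ≤ K)
    (p : Fin n → ℝ) (hp : p ∈ PF n u) (hpL : p L = u L) (hpK : p K = u K)
    (h : ∀ i, i ≠ K → i ≠ L → p i = 0) :
    p ∈ Set.extremePoints ℝ (PF n u) := by
  rw [mem_extremePoints]
  refine ⟨hp, fun y hy z hz ⟨s, t, hs, ht, hst, e⟩ => ?_⟩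
  have e' := fun i => congrFun e i
  simp only [Pi.add_apply, Pi.smul_apply, smul_eq_mul] at e'
  have hts : t + s = 1 := by linarith
  have ee : ∀ i, t * z i + s * y i = p i := fun i => by rw [← e' i, add_comm]
  have yL : y L = u L := seg_eq hs ht hst (pk_le n u hmono L hL y hy L)
    (pk_le n u hmono L hL z hz L) (by rw [e', hpL])
  have zL : z L = u L := seg_eq ht hs hts (pk_le n u hmono L hL z hz L)
    (pk_le n u hmono L hL y hy L) (by rw [ee, hpL])
  have y2 := pk_le2 n u hmono K L hL hK y hy L K hKL.symm
  have z2 := pk_le2 n u hmono K L hL hK z hz L K hKL.symm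
  have yK : y K = u K := seg_eq (b := z K) hs ht hst (by linarith) (by linarith) (by rw [e', hpK])
  have zK : z K = u K := seg_eq (b := y K) ht hs hts (by linarith) (by linarith) (by rw [ee, hpK])
  constructor
  · funext i
    by_cases h1 : i = K
    · rw [h1, yK, hpK]
    by_cases h2 : i = L
    · rw [h2, yL, hpL]
    have h0 := h i h1 h2
    rw [h0]
    exact seg_eq' hs ht hst (pk_nonneg n u y hy i) (pk_nonneg n u z hz i) (by rw [e', h0])
  · funext i
    by_cases h1 : i = K
    · rw [h1, zK, hpK]
    by_cases h2 : i = L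
    · rw [h2, zL, hpL]
    have h0 := h i h1 h2
    rw [h0]
    exact seg_eq' ht hs hts (pk_nonneg n u z hz i) (pk_nonneg n u y hy i) (by rw [ee, h0])

theorem facet_zero (n : ℕ) (u : Fin n → ℝ) (hnonneg : ∀ i, 0 ≤ u i)
    (L Z : Fin n) (hL : ∀ i, i ≤ L) (hpos : 0 < u L) :
    IsFacetOf n (PF n u) {x ∈ PF n u | x Z = 0} := by
  have h0 := pk_zero n u hnonneg
  refine ⟨⟨Pi.single Z (-1), ?_⟩, ⟨0, h0, rfl⟩, ?_⟩
  · ext x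
    simp only [Set.mem_ofPred_eq, Pi.single_apply, ite_mul, zero_mul, Finset.sum_ite_eq',
      Finset.mem_univ, if_true, neg_mul, one_mul, neg_le_neg_iff]
    refine and_congr_right fun hx => ⟨fun h y hy => ?_, fun h => ?_⟩
    · rw [h]; exact pk_nonneg n u y hy Z
    · exact le_antisymm (h 0 h0) (pk_nonneg n u x hx Z)
  · have hdir : (affineSpan ℝ {x ∈ PF n u | x Z = 0}).direction =
        LinearMap.ker (LinearMap.proj (R := ℝ) (φ := fun _ : Fin n => ℝ) Z) := by
      rw [direction_affineSpan]
      have hmem : (0 : Fin n → ℝ) ∈ {x ∈ PF n u | x Z = 0} := ⟨h0, rfl⟩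
      rw [vectorSpan_eq_span_vsub_set_right ℝ hmem]
      simp only [vsub_eq_sub, sub_zero, Set.image_id']
      apply le_antisymm
      · rw [Submodule.span_le]
        intro x hx
        exact hx.2
      · intro x hx
        have hx' : x Z = 0 := hx
        rw [pi_eq_sum_univ' x]
        refine Submodule.sum_mem _ fun i _ => ?_
        by_cases hi : i = Z
        · rw [hi, hx', zero_smul]; exact Submodule.zero_mem _
        · have : x i • (fun j => if i = j then (1:ℝ) else 0) =
              (x i / u L) • (Pi.single i (u L) : Fin n → ℝ) := by
            funext j
            simp only [Pi.smul_apply, Pi.single_apply, smul_eq_mul, eq_comm (a := i)]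
            split_ifs
            · field_simp
            · simp
          have h2 : (Pi.single i (u L) : Fin n → ℝ) ∈ {x ∈ PF n u | x Z = 0} :=
            ⟨pk_single n u hnonneg L hL i, by simp [Ne.symm hi]⟩
          have h3 := Submodule.smul_mem _ (x i / u L) (Submodule.subset_span (R := ℝ) h2)
          rw [← this] at h3
          convert h3 using 2
          try (funext j; simp [Pi.single_apply, eq_comm])
    rw [hdir]
    have hr := LinearMap.finrank_range_add_finrank_ker
      (LinearMap.proj (R := ℝ) (φ := fun _ : Fin n => ℝ) Z)
    rw [LinearMap.range_eq_top.2 (LinearMap.proj_surjective Z), finrank_top] at hr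
    simp at hr
    omega

theorem pf_simplex (n : ℕ) (u : Fin n → ℝ) (hnonneg : ∀ i, 0 ≤ u i)
    (L : Fin n) (hL : ∀ i, i ≤ L) (hpos : 0 < u L) (hz : ∀ i, i ≠ L → u i = 0) :
    PF n u = convexHull ℝ
        (insert (0 : Fin n → ℝ) {x | ∃ i : Fin n, x = u L • Pi.single i (1 : ℝ)}) := by
  apply Set.Subset.antisymm
  · refine convexHull_min ?_ (convex_convexHull _ _)
    rintro a ⟨ha, σ, -, h⟩
    have ha0 : ∀ j, j ≠ σ L → a j = 0 := by
      intro j hj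
      have h1 := h (σ.symm j)
      have h2 : σ.symm j ≠ L := fun h => hj (by rw [← h]; simp)
      rw [hz _ h2, Equiv.apply_symm_apply] at h1
      exact le_antisymm h1 (ha j)
    have hA : (0 : Fin n → ℝ) ∈ convexHull ℝ
        (insert (0 : Fin n → ℝ) {x | ∃ i : Fin n, x = u L • Pi.single i (1 : ℝ)}) :=
      subset_convexHull _ _ (Set.mem_insert _ _)
    have hB : u L • Pi.single (σ L) (1 : ℝ) ∈ convexHull ℝ
        (insert (0 : Fin n → ℝ) {x | ∃ i : Fin n, x = u L • Pi.single i (1 : ℝ)}) :=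
      subset_convexHull _ _ (Set.mem_insert_of_mem _ ⟨_, rfl⟩)
    have hle : a (σ L) / u L ≤ 1 := (div_le_one hpos).2 (h L)
    have := convex_convexHull ℝ _ hA hB (a := 1 - a (σ L) / u L) (b := a (σ L) / u L)
      (by linarith) (div_nonneg (ha _) hpos.le) (by ring)
    convert this using 1
    funext j
    by_cases hj : j = σ L
    · subst hj; simp; field_simp
    · simp [ha0 j hj, hj]
  · refine convexHull_min ?_ (convex_convexHull _ _)
    rintro x (rfl | ⟨i, rfl⟩)
    · exact pk_zero n u hnonneg
    · have := pk_single n u hnonneg L hL i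
      convert this using 1
      rw [← Pi.single_smul]; simp

theorem simplex_facets (n : ℕ) (hn : 3 ≤ n) (d : ℝ) (hd : 0 < d) (P : Set (Fin n → ℝ))
    (hP : P = convexHull ℝ
        (insert (0 : Fin n → ℝ) {x | ∃ i : Fin n, x = d • Pi.single i (1 : ℝ)}))
    (F : Set (Fin n → ℝ)) (hF : IsFacetOf n P F) :
    Nat.card ↥(F ∩ Set.extremePoints ℝ P) = n := by
  obtain ⟨⟨w, hw⟩, hne, hdim⟩ := hF
  have hset : {x : Fin n → ℝ | ∃ i : Fin n, x = d • Pi.single i (1 : ℝ)} =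
      Set.range (fun i : Fin n => d • (Pi.single i (1 : ℝ) : Fin n → ℝ)) := by
    ext x; simp [eq_comm]
  rw [hset] at hP
  set V : Set (Fin n → ℝ) := insert (0 : Fin n → ℝ)
    (Set.range (fun i : Fin n => d • (Pi.single i (1 : ℝ) : Fin n → ℝ))) with hV
  have hVfin : V.Finite := (Set.finite_range _).insert _
  have hVaff : AffineIndependent ℝ (fun p => p : V → Fin n → ℝ) := by
    have hli : LinearIndependent ℝ (fun i : Fin n => d • (Pi.single i (1 : ℝ) : Fin n → ℝ)) := by
      have := (Pi.basisFun ℝ (Fin n)).linearIndependent.units_smul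
        (fun _ => Units.mk0 d hd.ne')
      convert this using 1
      funext i
      simp [Units.smul_def]
    have h2 := hli.linearIndepOn_id
    have h3 := (linearIndependent_set_iff_affineIndependent_vadd_union_singleton ℝ
      (s := Set.range (fun i : Fin n => d • (Pi.single i (1 : ℝ) : Fin n → ℝ)))
      (by
        rintro v ⟨i, rfl⟩ h
        have := congrFun h i
        simp at this
        exact hd.ne' this) (0 : Fin n → ℝ)).1 h2
    have hVV : V = {(0 : Fin n → ℝ)} ∪ (fun v : Fin n → ℝ => v +ᵥ (0 : Fin n → ℝ)) ''
        Set.range (fun i : Fin n => d • (Pi.single i (1 : ℝ) : Fin n → ℝ)) := by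
      simp only [vadd_eq_add, add_zero, Set.image_id']
      exact Set.insert_eq _ _
    rw [hVV]
    exact h3
  have hexp : IsExposed ℝ P F := by
    intro _
    refine ⟨∑ i, w i • ContinuousLinearMap.proj (R := ℝ) (φ := fun _ : Fin n => ℝ) i, ?_⟩
    rw [hw]
    simp
  have hPc : IsCompact P := hP ▸ hVfin.isCompact_convexHull ℝ
  have hPconv : Convex ℝ P := hP ▸ convex_convexHull _ _
  have hFc : IsCompact F := hexp.isCompact hPc
  have hFconv : Convex ℝ F := hexp.convex hPconv
  set S := F ∩ Set.extremePoints ℝ P with hS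
  have hSext : Set.extremePoints ℝ F = S := hexp.isExtreme.extremePoints_eq
  have hSV : S ⊆ V := fun x hx => extremePoints_convexHull_subset (hP ▸ hx.2)
  have hSfin : S.Finite := hVfin.subset hSV
  have hKM := closure_convexHull_extremePoints hFc hFconv
  rw [hSext, (hSfin.isClosed_convexHull ℝ).closure_eq] at hKM
  have hSne : S.Nonempty := by
    rw [← hKM] at hne
    exact convexHull_nonempty_iff.1 hne
  rw [← hKM, affineSpan_convexHull, direction_affineSpan] at hdim
  have hSaff : AffineIndependent ℝ (fun p => p : S → Fin n → ℝ) := hVaff.mono hSV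
  haveI : Fintype S := hSfin.fintype
  haveI : Nonempty S := hSne.to_subtype
  have := hSaff.finrank_vectorSpan_add_one
  rw [Subtype.range_coe, hdim] at this
  rw [Nat.card_eq_fintype_card]
  omega

theorem not_simplicial (n : ℕ) (u : Fin n → ℝ)
    (hmono : Monotone u) (hnonneg : ∀ i, 0 ≤ u i) (K L Z : Fin n) (hKL : K ≠ L) (hZL : Z ≠ L)
    (hZK : Z ≠ K) (hL : ∀ i, i ≤ L) (hK : ∀ i, i ≠ L → i ≤ K) (hpos : 0 < u K)
    (h : Nat.card ↥({x ∈ PF n u | x Z = 0} ∩ Set.extremePoints ℝ (PF n u)) = n) : False := by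
  have hposL : 0 < u L := hpos.trans_le (hmono (hL K))
  have hKltL : K < L := lt_of_le_of_ne (hL K) hKL
  set p : Fin n → ℝ := fun i => if i = L then u L else if i = K then u K else 0 with hp
  have hpL : p L = u L := by simp [hp]
  have hpK : p K = u K := by simp [hp, hKL]
  have hp0 : ∀ i, i ≠ K → i ≠ L → p i = 0 := fun i h1 h2 => by simp [hp, h1, h2]
  have hpPF : p ∈ PF n u := by
    apply subset_convexHull
    refine ⟨fun i => ?_, 1, ?_, fun i => ?_⟩
    · simp only [hp]; split_ifs
      exacts [hposL.le, hpos.le, le_rfl]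
    · intro a b hab
      have haL := hL a
      have hbL := hL b
      have hbK := hK b
      simp only [hp, Equiv.Perm.coe_one, id]
      split_ifs with h1 h2 h3 h3 h4 h5 <;> first | exact le_rfl | exact hposL.le | exact hpos.le | exact hmono (hL K) | (exfalso; subst_vars; first | exact h2 (le_antisymm hbL hab) | exact absurd (le_antisymm hbL hab) (by assumption) | exact absurd (le_antisymm (hbK (by assumption)) hab) (by assumption) | (exact absurd (lt_of_lt_of_le hKltL hab) (lt_irrefl _)))
    · simp only [hp, Equiv.Perm.coe_one, id]; split_ifs with h1 h2
      · rw [h1]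
      · rw [h2]
      · exact hnonneg i
  -- the family of n+1 extreme points
  let f : Option (Fin n) → (Fin n → ℝ) := fun o =>
    match o with
    | none => p
    | some i => if i = Z then 0 else Pi.single i (u L)
  have hf : ∀ o, f o ∈ {x ∈ PF n u | x Z = 0} ∩ Set.extremePoints ℝ (PF n u) := by
    intro o
    have hpart : f o ∈ Set.extremePoints ℝ (PF n u) ∧ f o Z = 0 := by
      match o with
      | none => exact ⟨ext_two n u hmono K L hKL hL hK p hpPF hpL hpK hp0, hp0 Z hZK hZL⟩
      | some i =>
        by_cases hi : i = Z
        · simp only [f, hi, if_true]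
          exact ⟨ext_box n u hmono L hL 0 (pk_zero n u hnonneg) (fun i => Or.inl rfl), rfl⟩
        · simp only [f, hi, if_false]
          refine ⟨ext_box n u hmono L hL _ (pk_single n u hnonneg L hL i) (fun j => ?_), ?_⟩
          · by_cases hj : j = i
            · subst hj; simp
            · simp [hj]
          · simp [Ne.symm hi]
    exact ⟨⟨hpart.1.1, hpart.2⟩, hpart.1⟩
  have hnp : ∀ i, f (some i) ≠ p := by
    intro i e
    have eL := congrFun e L
    have eK := congrFun e K
    rw [hpL] at eL
    rw [hpK] at eK
    by_cases hi : i = Z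
    · simp [f, hi] at eL; linarith
    · simp only [f, hi, if_false, Pi.single_apply] at eL eK
      split_ifs at eL eK with h1 h2
      · exact hKL (h2.trans h1.symm)
      all_goals linarith
  have hinj : Function.Injective f := by
    intro a b hab
    match a, b with
    | none, none => rfl
    | none, some j => exact absurd hab.symm (hnp j)
    | some i, none => exact absurd hab (hnp i)
    | some i, some j =>
      congr 1
      by_cases hi : i = Z <;> by_cases hj : j = Z
      · rw [hi, hj]
      · have := congrFun hab j
        simp [f, hi, hj] at this
        linarith
      · have := congrFun hab i
        simp [f, hi, hj] at this
        linarith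
      · by_contra hij
        have := congrFun hab i
        simp [f, hi, hj, hij] at this
        linarith
  have hn0 : 0 < n := Z.pos
  haveI : Finite ↥({x ∈ PF n u | x Z = 0} ∩ Set.extremePoints ℝ (PF n u)) :=
    Nat.finite_of_card_ne_zero (by omega)
  have hle := Nat.card_le_card_of_injective
    (fun o => (⟨f o, hf o⟩ : ↥({x ∈ PF n u | x Z = 0} ∩ Set.extremePoints ℝ (PF n u))))
    (fun a b hab => hinj (congrArg Subtype.val hab))
  rw [h] at hle
  simp at hle

/-- For `n ≥ 3`, the parking function polytope `PF(u)` is simplicial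
(every facet contains exactly `n` extreme points) iff `m(u) = (n-1,1)`,
i.e. `u = (0,…,0,d)` for some `d > 0`; and in that case `PF(u)` is the
simplex `conv(0, d·e₁, …, d·eₙ)`. -/
theorem parking_polytope_simplicial_iff
    (n : ℕ) (hn : 3 ≤ n) (u : Fin n → ℝ)
    (hmono : Monotone u) (hnonneg : ∀ i, 0 ≤ u i) (hne : u ≠ 0) :
    ((∀ F : Set (Fin n → ℝ), IsFacetOf n (PF n u) F →
        Nat.card ↥(F ∩ Set.extremePoints ℝ (PF n u)) = n) ↔
      (∃ d : ℝ, 0 < d ∧ (∀ i : Fin n, (i : ℕ) < n - 1 → u i = 0) ∧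
        u ⟨n - 1, by omega⟩ = d)) ∧
    (∀ d : ℝ, 0 < d → (∀ i : Fin n, (i : ℕ) < n - 1 → u i = 0) →
      u ⟨n - 1, by omega⟩ = d →
      PF n u = convexHull ℝ
        (insert (0 : Fin n → ℝ) {x | ∃ i : Fin n, x = d • Pi.single i (1 : ℝ)})) := by

  have hL : ∀ i : Fin n, i ≤ ⟨n - 1, by omega⟩ := fun i => by
    rw [Fin.le_def]; show (i : ℕ) ≤ n - 1; have := i.2; omega
  have hlt : ∀ i : Fin n, i ≠ ⟨n - 1, by omega⟩ → (i : ℕ) < n - 1 := fun i hi => by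
    have h1 : (i : ℕ) ≠ n - 1 := fun h => hi (Fin.ext h)
    have := i.2
    omega
  have simp_eq : ∀ d : ℝ, 0 < d → (∀ i : Fin n, (i : ℕ) < n - 1 → u i = 0) →
      u ⟨n - 1, by omega⟩ = d →
      PF n u = convexHull ℝ
        (insert (0 : Fin n → ℝ) {x | ∃ i : Fin n, x = d • Pi.single i (1 : ℝ)}) := by
    intro d hd h0 hdu
    rw [← hdu] at hd ⊢
    exact pf_simplex n u hnonneg _ hL hd (fun i hi => h0 i (hlt i hi))
  refine ⟨⟨fun h => ?_, ?_⟩, simp_eq⟩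
  · have hpos : 0 < u ⟨n - 1, by omega⟩ := by
      refine lt_of_le_of_ne (hnonneg _) fun h0 => hne ?_
      funext i
      exact le_antisymm ((hmono (hL i)).trans h0.symm.le) (hnonneg i)
    refine ⟨_, hpos, ?_, rfl⟩
    have hK : ∀ i : Fin n, i ≠ ⟨n - 1, by omega⟩ → i ≤ ⟨n - 2, by omega⟩ := fun i hi => by
      have := hlt i hi
      rw [Fin.le_def]; show (i : ℕ) ≤ n - 2; omega
    have hK0 : u ⟨n - 2, by omega⟩ = 0 := by
      by_contra hc
      have hposK := lt_of_le_of_ne (hnonneg _) (Ne.symm hc)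
      refine not_simplicial n u hmono hnonneg ⟨n - 2, by omega⟩ ⟨n - 1, by omega⟩ ⟨0, by omega⟩
        ?_ ?_ ?_ hL hK hposK (h _ (facet_zero n u hnonneg ⟨n - 1, by omega⟩ _ hL hpos))
      all_goals
        rw [Ne, Fin.mk.injEq]; omega
    intro i hi
    refine le_antisymm ?_ (hnonneg i)
    rw [← hK0]
    exact hmono (hK i (fun h => by rw [h] at hi; simp at hi))
  · rintro ⟨d, hd, h0, hdu⟩ F hF
    exact simplex_facets n hn d hd _ (simp_eq d hd h0 hdu) F hF
end
end
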